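/- Let v, k, λ, μ be natural numbers with 0 < μ < k and k < v−1, and let θ₁ ≥ θ₂ be integers with θ₁ + θ₂ = λ − μ and θ₁·θ₂ = −(k − μ). Suppose (θ₁ − θ₂) does not divide at least one of μ − θ₂·(θ₁ + 1) and v − 2k + λ − θ₂·(θ₁ + 1) (as integers). Then no finite abelian group of order v contains a (v,k,λ,μ) partial difference set; that is, any (v,k,λ,μ) PDS is genuinely nonabelian. -/

import Mathlib

/-!
Let `χ` be a nontrivial complex character of the abelian group `G` and `χ(S) = ∑ s ∈ S, χ s`.
Expanding `∑ x y ∈ S, χ (x * y⁻¹)` with the defining property of a partial difference set gives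
`χ(S)² = (k - m) + (l - m) χ(S)`, so `χ(S)` is `θ₁` or `θ₂` (`charSum_eq_or_eq`). For `g ≠ 1`,
Fourier inversion expresses `v * [g ∈ S]` as `∑ χ, χ(S) χ(g⁻¹) = (k - θ₂) + (θ₁ - θ₂) * a`, where
`a` is the sum of `χ(g⁻¹)` over the nontrivial `χ` with `χ(S) = θ₁`: write
`χ(S) = θ₂ + (θ₁ - θ₂) * [χ(S) = θ₁]` and use that the nontrivial `χ(g⁻¹)` add up to `-1`.
Now `a` is a sum of roots of unity, hence an algebraic integer, and it is rational because
`θ₁ ≠ θ₂`; so it is an integer and `θ₁ - θ₂` divides `v * [g ∈ S] - (k - θ₂)`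
(`dvd_of_ne_one`). Both divisibilities of the theorem are instances of this, for a
nonidentity `g ∉ S` and for a `g ∈ S` respectively.
-/

attribute [local instance] Classical.propDecidable

/-- `S` is a `(v,k,l,m)` partial difference set in the group `G`:
`G` has order `v`, `|S| = k`, `1 ∉ S`, `S = S⁻¹`, and every nonidentity `g ∈ G` has exactly
`l` (resp. `m`) representations `g = x * y⁻¹` with `x, y ∈ S` when `g ∈ S` (resp. `g ∉ S`). -/
def IsPDS {G : Type*} [Group G] (v k l m : ℕ) (S : Set G) : Prop :=
  Nat.card G = v ∧ Nat.card S = k ∧ (1 : G) ∉ S ∧ (∀ s ∈ S, s⁻¹ ∈ S) ∧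
  ∀ g : G, g ≠ 1 →
    Nat.card {p : ↥S × ↥S // (p.1 : G) * (p.2 : G)⁻¹ = g} = if g ∈ S then l else m

/-- A character orthogonal to the trivial one takes the value `θ₁` or `θ₂` on a partial difference
set. -/
lemma charSum_eq_or_eq {G : Type*} [CommGroup G] [Fintype G] {v k l m : ℕ} {S : Set G}
    (hS : IsPDS v k l m S) {θ₁ θ₂ : ℤ} (hsum : θ₁ + θ₂ = (l : ℤ) - (m : ℤ))
    (hprod : θ₁ * θ₂ = -((k : ℤ) - (m : ℤ))) (χ : G →* ℂ) (hχ : ∑ g, χ g = 0) :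
    ∑ s : S, χ s = θ₁ ∨ ∑ s : S, χ s = θ₂ := by
  obtain ⟨-, hk, h1, hinv, hN⟩ := hS
  set E : ℂ := ∑ s : S, χ s with hE
  have hE' : ∑ g : G, (if g ∈ S then χ g else 0) = E := by
    rw [hE, ← Finset.sum_filter]
    exact (Finset.sum_subtype _ (by simp) _)
  have hEinv : ∑ s : S, χ (s : G)⁻¹ = E := by
    rw [hE]
    refine Finset.sum_nbij' (fun s => ⟨(s : G)⁻¹, hinv _ s.2⟩) (fun s => ⟨(s : G)⁻¹, hinv _ s.2⟩)
      ?_ ?_ ?_ ?_ ?_ <;> simp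
  have hsq : E * E = ∑ p : S × S, χ ((p.1 : G) * (p.2 : G)⁻¹) := by
    nth_rewrite 2 [← hEinv]
    rw [hE, Fintype.sum_mul_sum, Fintype.sum_prod_type]
    simp only [map_mul]
  have hfib : ∑ p : S × S, χ ((p.1 : G) * (p.2 : G)⁻¹) =
      ∑ g : G, (Nat.card {p : ↥S × ↥S // (p.1 : G) * (p.2 : G)⁻¹ = g} : ℂ) * χ g := by
    rw [← Finset.sum_fiberwise _ (fun p : S × S => (p.1 : G) * (p.2 : G)⁻¹)]
    refine Finset.sum_congr rfl fun g _ => ?_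
    rw [Finset.sum_congr rfl (g := fun _ => χ g)
      (fun p hp => by rw [(Finset.mem_filter.1 hp).2]), Finset.sum_const, nsmul_eq_mul,
      Nat.card_eq_fintype_card, Fintype.card_subtype]
  have hN1 : Nat.card {p : ↥S × ↥S // (p.1 : G) * (p.2 : G)⁻¹ = 1} = k := by
    rw [← hk]
    refine Nat.card_congr ⟨fun p => p.1.1, fun s => ⟨(s, s), by simp⟩, ?_, ?_⟩
    · rintro ⟨⟨x, y⟩, h⟩
      have : x = y := Subtype.ext (mul_inv_eq_one.1 h)
      simp [this]
    · intro s; rfl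
  have hterm : ∀ g : G, (Nat.card {p : ↥S × ↥S // (p.1 : G) * (p.2 : G)⁻¹ = g} : ℂ) * χ g =
      m * χ g + (l - m) * (if g ∈ S then χ g else 0) + (if g = 1 then (k - m : ℂ) else 0) := by
    intro g
    by_cases hg : g = 1
    · subst hg
      rw [hN1]; simp [h1]
    · rw [hN g hg]
      by_cases hgS : g ∈ S
      · simp only [hg, hgS, if_true, if_false]; ring
      · simp [hg, hgS]
  have key : E * E = (l - m) * E + (k - m) := by
    rw [hsq, hfib, Finset.sum_congr rfl fun g _ => hterm g, Finset.sum_add_distrib,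
      Finset.sum_add_distrib, ← Finset.mul_sum, ← Finset.mul_sum, hE', hχ]
    simp
  have hs : (θ₁ : ℂ) + θ₂ = l - m := by exact_mod_cast congrArg (Int.cast : ℤ → ℂ) hsum
  have hp : (θ₁ : ℂ) * θ₂ = -(k - m) := by exact_mod_cast congrArg (Int.cast : ℤ → ℂ) hprod
  have : (E - θ₁) * (E - θ₂) = 0 := by linear_combination key - E * hs + hp
  rcases mul_eq_zero.1 this with h | h
  · exact Or.inl (sub_eq_zero.1 h)
  · exact Or.inr (sub_eq_zero.1 h)

/-- An integer that is `n` times an algebraic integer is divisible by `n`. -/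
lemma dvd_of_eq_mul_isIntegral {n b : ℤ} (hn : n ≠ 0) {a : ℂ} (ha : IsIntegral ℤ a)
    (h : (b : ℂ) = n * a) : n ∣ b := by
  have hn' : (n : ℂ) ≠ 0 := by exact_mod_cast hn
  have hq : a = algebraMap ℚ ℂ ((b : ℚ) / n) := by
    simp only [map_div₀, map_intCast]
    field_simp
    rw [h]; ring
  rw [hq, isIntegral_algebraMap_iff (algebraMap ℚ ℂ).injective] at ha
  obtain ⟨z, hz⟩ := IsIntegrallyClosed.isIntegral_iff.1 ha
  refine ⟨z, ?_⟩
  have hn'' : (n : ℚ) ≠ 0 := by exact_mod_cast hn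
  have : (b : ℚ) = n * z := by
    have : (z : ℚ) = b / n := by simpa using hz
    rw [this]; field_simp
  exact_mod_cast this

/-- The multiplicative form of a character of `Additive G`. -/
def toMulHom {G : Type*} [CommGroup G] (ψ : AddChar (Additive G) ℂ) : G →* ℂ where
  toFun g := ψ (Additive.ofMul g)
  map_one' := by simp
  map_mul' x y := by rw [ofMul_mul, AddChar.map_add_eq_mul]

/-- Integrality of the Fourier coefficient of `S` at `g ≠ 1`. -/
lemma dvd_of_ne_one {G : Type*} [CommGroup G] [Fintype G] {v k l m : ℕ} {S : Set G}
    (hS : IsPDS v k l m S) {θ₁ θ₂ : ℤ} (hne : θ₁ - θ₂ ≠ 0) (hsum : θ₁ + θ₂ = (l : ℤ) - (m : ℤ))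
    (hprod : θ₁ * θ₂ = -((k : ℤ) - (m : ℤ))) {g : G} (hg : g ≠ 1) :
    θ₁ - θ₂ ∣ (if g ∈ S then (v : ℤ) else 0) - (k - θ₂) := by
  have hv : Fintype.card G = v := by rw [← Nat.card_eq_fintype_card]; exact hS.1
  have hk : Fintype.card S = k := by rw [← Nat.card_eq_fintype_card]; exact hS.2.1
  let E : AddChar (Additive G) ℂ → ℂ := fun ψ => ∑ s : S, toMulHom ψ s
  have hE0 : E 0 = k := by
    simp [E, toMulHom, ← hk]
  have hE : ∀ ψ : AddChar (Additive G) ℂ, ψ ≠ 0 → E ψ = θ₁ ∨ E ψ = θ₂ := fun ψ hψ =>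
    charSum_eq_or_eq hS hsum hprod _
      ((Fintype.sum_equiv Additive.ofMul _ ψ fun _ => rfl).trans
        (AddChar.sum_eq_zero_iff_ne_zero.2 hψ))
  have horth : ∀ x : G, ∑ ψ : AddChar (Additive G) ℂ, toMulHom ψ x =
      if x = 1 then (v : ℂ) else 0 := by
    intro x
    have := AddChar.sum_apply_eq_ite (Additive.ofMul x)
    simp only [ofMul_eq_zero, Fintype.card_additive] at this
    rw [← hv]
    exact this
  have hinv : ∑ ψ, E ψ * toMulHom ψ g⁻¹ = if g ∈ S then (v : ℂ) else 0 := by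
    simp only [E, Finset.sum_mul, ← map_mul]
    rw [Finset.sum_comm]
    simp only [horth, mul_inv_eq_one]
    by_cases hgS : g ∈ S
    · rw [if_pos hgS, Finset.sum_eq_single (⟨g, hgS⟩ : S)]
      · simp
      · intro b _ hb
        rw [if_neg fun h => hb (Subtype.ext h)]
      · simp
    · rw [if_neg hgS]
      refine Finset.sum_eq_zero fun s _ => if_neg ?_
      rintro rfl
      exact hgS s.2
  let a : ℂ := ∑ ψ, if ψ ≠ 0 ∧ E ψ = θ₁ then toMulHom ψ g⁻¹ else 0
  have ha : IsIntegral ℤ a := by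
    refine IsIntegral.sum _ fun ψ _ => ?_
    split_ifs
    · refine IsIntegral.of_pow (n := Fintype.card G) Fintype.card_pos ?_
      rw [← map_pow, pow_card_eq_one, map_one]
      exact isIntegral_one
    · exact isIntegral_zero
  refine dvd_of_eq_mul_isIntegral hne ha ?_
  have hterm : ∀ ψ, E ψ * toMulHom ψ g⁻¹ = θ₂ * toMulHom ψ g⁻¹
      + (θ₁ - θ₂) * (if ψ ≠ 0 ∧ E ψ = θ₁ then toMulHom ψ g⁻¹ else 0)
      + (if ψ = 0 then (k - θ₂ : ℂ) else 0) := by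
    intro ψ
    by_cases hψ : ψ = 0
    · subst hψ
      rw [hE0]; simp [toMulHom]
    · by_cases h1 : E ψ = θ₁
      · simp only [hψ, h1, ne_eq, not_false_eq_true, and_self, if_true, if_false]; ring
      · have h2 := (hE ψ hψ).resolve_left h1
        simp only [h1, and_false, if_false, hψ]; rw [h2]; ring
  rw [Finset.sum_congr rfl fun ψ _ => hterm ψ, Finset.sum_add_distrib, Finset.sum_add_distrib,
    ← Finset.mul_sum, ← Finset.mul_sum, horth, if_neg (inv_ne_one.2 hg)] at hinv
  simp only [Finset.sum_ite_eq', Finset.mem_univ, if_true] at hinv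
  push_cast
  linear_combination -hinv

/-- If `θ₁−θ₂` fails to divide at least one of `m − θ₂(θ₁+1)` and `v − 2k + l − θ₂(θ₁+1)`,
then no finite abelian group of order `v` contains a `(v,k,l,m)` PDS; i.e., any `(v,k,l,m)`
PDS is genuinely nonabelian. -/
theorem stmt_19 (v k l m : ℕ) (hm : 0 < m) (hmk : m < k) (hkv : k < v - 1)
    (θ₁ θ₂ : ℤ) (hθ : θ₂ ≤ θ₁) (hsum : θ₁ + θ₂ = (l : ℤ) - (m : ℤ))
    (hprod : θ₁ * θ₂ = -((k : ℤ) - (m : ℤ)))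
    (h : ¬ (θ₁ - θ₂) ∣ ((m : ℤ) - θ₂ * (θ₁ + 1)) ∨
      ¬ (θ₁ - θ₂) ∣ ((v : ℤ) - 2 * (k : ℤ) + (l : ℤ) - θ₂ * (θ₁ + 1)))
    {G : Type*} [CommGroup G] [Finite G] (S : Set G) :
    ¬ IsPDS v k l m S := by
  intro hS
  cases nonempty_fintype G
  have hne : θ₁ - θ₂ ≠ 0 := by
    intro h0
    have : θ₁ = θ₂ := by linarith
    subst this
    nlinarith [mul_self_nonneg θ₁]
  obtain ⟨hv, hk, h1, -, -⟩ := id hS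
  rcases h with h | h
  · obtain ⟨g, hg⟩ : ∃ g, g ∉ insert 1 S := by
      by_contra! hall
      have huniv : insert 1 S = Set.univ := Set.eq_univ_of_forall hall
      have hc := Set.ncard_insert_le 1 S
      rw [huniv, Set.ncard_univ, hv] at hc
      have : S.ncard = k := hk
      omega
    rw [Set.mem_insert_iff, not_or] at hg
    have := dvd_of_ne_one hS hne hsum hprod hg.1
    rw [if_neg hg.2] at this
    apply h
    obtain ⟨c, hc⟩ := this
    exact ⟨-c, by linear_combination -hc - hprod⟩
  · obtain ⟨g, hg⟩ : S.Nonempty := by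
      by_contra! h0
      subst h0
      simp at hk
      omega
    have := dvd_of_ne_one hS hne hsum hprod (g := g) (by rintro rfl; exact h1 hg)
    rw [if_pos hg] at this
    apply h
    obtain ⟨c, hc⟩ := this
    -- Here `v - 2 * k + l - θ₂ * (θ₁ + 1) = (v - (k - θ₂)) + (θ₁ - θ₂)`.
    exact ⟨c + 1, by linear_combination hc - hprod - hsum⟩
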